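/- arXiv:1511.01290 — 5 statements merged into one kernel-verified Lean document; each statement's English description precedes it below -/
import Mathlib

section
/- There exist constants C_l, C_u > 0, depending only on k, ℓ and L₀, such that for every quasi shell solution y and every r ∈ [R₀, 2R₀] with γ(r) ≥ 0 one has C_l γ(r)^{k+ℓ+3/2}/r⁴ ≤ ϱ(r) ≤ C_u γ(r)^{k+ℓ+3/2}/r⁴. -/
open MeasureTheory Real Set Filter

/-- The constant `c_ℓ = 2π ∫₀¹ s^ℓ (1-s)^{-1/2} ds`. -/
noncomputable def cConst (ℓ : ℝ) : ℝ :=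
  2 * π * ∫ s in Set.Ioc (0 : ℝ) 1, s ^ ℓ / Real.sqrt (1 - s)

/-- Energy density of the massless Einstein--Vlasov ansatz. -/
noncomputable def rho (k ℓ L0 : ℝ) (y : ℝ → ℝ) (r : ℝ) : ℝ :=
  cConst ℓ * r ^ (2 * ℓ) *
    ∫ ε in Set.Ioc (Real.sqrt L0 / r) (Real.exp (y r)),
      (1 - ε * Real.exp (-(y r))) ^ k * ε ^ 2 * (ε ^ 2 - L0 / r ^ 2) ^ (ℓ + 1 / 2)

/-- Radial pressure of the massless Einstein--Vlasov ansatz. -/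
noncomputable def pres (k ℓ L0 : ℝ) (y : ℝ → ℝ) (r : ℝ) : ℝ :=
  (cConst ℓ / (2 * ℓ + 3)) * r ^ (2 * ℓ) *
    ∫ ε in Set.Ioc (Real.sqrt L0 / r) (Real.exp (y r)),
      (1 - ε * Real.exp (-(y r))) ^ k * (ε ^ 2 - L0 / r ^ 2) ^ (ℓ + 3 / 2)

/-- The Hawking mass `m(r) = 4π ∫₀ʳ s² ϱ(s) ds`. -/
noncomputable def hawkingMass (k ℓ L0 : ℝ) (y : ℝ → ℝ) (r : ℝ) : ℝ :=
  4 * π * ∫ s in Set.Ioc (0 : ℝ) r, s ^ 2 * rho k ℓ L0 y s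

/-- The characteristic function `γ(r) = y(r) - (1/2) ln (L₀ / r²)`. -/
noncomputable def charFn (L0 : ℝ) (y : ℝ → ℝ) (r : ℝ) : ℝ :=
  y r - (1 / 2) * Real.log (L0 / r ^ 2)

/-- The inner radius `R₀ = √L₀ e^{-y(0)}`. -/
noncomputable def innerRadius (L0 : ℝ) (y : ℝ → ℝ) : ℝ :=
  Real.sqrt L0 * Real.exp (-(y 0))

/-- A quasi shell solution of the massless Einstein--Vlasov system. -/
def QuasiShell (k ℓ L0 : ℝ) (y : ℝ → ℝ) : Prop :=
  ContDiffOn ℝ 1 y (Set.Ici 0) ∧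
  ∀ r > 0, 2 * hawkingMass k ℓ L0 y r / r < 1 ∧
    HasDerivAt y
      (-(1 - 2 * hawkingMass k ℓ L0 y r / r)⁻¹ *
        (4 * π * r * pres k ℓ L0 y r + hawkingMass k ℓ L0 y r / r ^ 2)) r

lemma cConst_integrable (ℓ : ℝ) (hl : -(1 / 2) ≤ ℓ) :
    IntegrableOn (fun s : ℝ => s ^ ℓ / Real.sqrt (1 - s)) (Set.Ioc (0 : ℝ) 1) := by
  have h := Complex.betaIntegral_convergent (u := ((ℓ + 1 : ℝ) : ℂ)) (v := ((1 / 2 : ℝ) : ℂ))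
    (by rw [Complex.ofReal_re]; linarith) (by rw [Complex.ofReal_re]; norm_num)
  rw [intervalIntegrable_iff_integrableOn_Ioo_of_le zero_le_one] at h
  rw [integrableOn_Ioc_iff_integrableOn_Ioo]
  refine IntegrableOn.congr_fun (Integrable.norm h) ?_ measurableSet_Ioo
  intro x hx
  have hx0 : 0 < x := hx.1
  have hx1 : 0 < 1 - x := by linarith [hx.2]
  have e1 : ‖(x : ℂ) ^ (((ℓ + 1 : ℝ) : ℂ) - 1)‖ = x ^ ℓ := by
    rw [Complex.norm_cpow_eq_rpow_re_of_pos hx0]; simp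
  have e2 : ‖(1 - (x : ℂ)) ^ (((1 / 2 : ℝ) : ℂ) - 1)‖ = (1 - x) ^ (-(1 / 2 : ℝ)) := by
    have : (1 - (x : ℂ)) = ((1 - x : ℝ) : ℂ) := by push_cast; ring
    rw [this, Complex.norm_cpow_eq_rpow_re_of_pos hx1]
    congr 1
    simp only [Complex.sub_re, Complex.ofReal_re, Complex.one_re]
    norm_num
  simp only [norm_mul, e1, e2]
  rw [Real.rpow_neg hx1.le, Real.sqrt_eq_rpow, ← div_eq_mul_inv]

lemma cConst_pos (ℓ : ℝ) (hl : -(1 / 2) ≤ ℓ) : 0 < cConst ℓ := by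
  unfold cConst
  have h : 0 < ∫ s in Set.Ioc (0 : ℝ) 1, s ^ ℓ / Real.sqrt (1 - s) := by
    rw [integral_Ioc_eq_integral_Ioo]
    have hi := cConst_integrable ℓ hl
    rw [integrableOn_Ioc_iff_integrableOn_Ioo] at hi
    rw [setIntegral_pos_iff_support_of_nonneg_ae]
    · have hsub : Set.Ioo (0 : ℝ) 1 ⊆
          Function.support (fun s : ℝ => s ^ ℓ / Real.sqrt (1 - s)) ∩ Set.Ioo 0 1 := by
        intro x hx
        refine ⟨?_, hx⟩
        have hx0 : 0 < x := hx.1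
        have hx1 : 0 < 1 - x := by linarith [hx.2]
        exact (by positivity : 0 < x ^ ℓ / Real.sqrt (1 - x)).ne'
      refine lt_of_lt_of_le ?_ (measure_mono hsub)
      simp
    · filter_upwards [ae_restrict_mem measurableSet_Ioo] with x hx
      have hx0 : 0 < x := hx.1
      have : 0 ≤ x ^ ℓ / Real.sqrt (1 - x) := by positivity
      simpa using this
    · exact hi
  positivity

lemma base1_nonneg {ε z : ℝ} (h : ε ≤ Real.exp z) : 0 ≤ 1 - ε * Real.exp (-z) := by
  have : ε * Real.exp (-z) ≤ Real.exp z * Real.exp (-z) := by gcongr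
  rw [← Real.exp_add] at this
  simp at this
  linarith

lemma base2_nonneg {ε L0 r : ℝ} (hL : 0 < L0) (hr : 0 < r) (h : Real.sqrt L0 / r ≤ ε) :
    0 ≤ ε ^ 2 - L0 / r ^ 2 := by
  have h2 : (Real.sqrt L0 / r) ^ 2 = L0 / r ^ 2 := by rw [div_pow, Real.sq_sqrt hL.le]
  have : (Real.sqrt L0 / r) ^ 2 ≤ ε ^ 2 := by gcongr
  linarith

lemma rho_nonneg (k ℓ L0 : ℝ) (hl : -(1 / 2) ≤ ℓ) (hL : 0 < L0)
    (y : ℝ → ℝ) (r : ℝ) (hr : 0 < r) : 0 ≤ rho k ℓ L0 y r := by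
  unfold rho
  have := cConst_pos ℓ hl
  refine mul_nonneg (by positivity) (setIntegral_nonneg measurableSet_Ioc ?_)
  intro ε hε
  have h1 := base1_nonneg hε.2
  have h2 := base2_nonneg hL hr hε.1.le
  positivity

lemma pres_nonneg (k ℓ L0 : ℝ) (hl : -(1 / 2) ≤ ℓ) (hL : 0 < L0)
    (y : ℝ → ℝ) (r : ℝ) (hr : 0 < r) : 0 ≤ pres k ℓ L0 y r := by
  unfold pres
  have := cConst_pos ℓ hl
  have h3 : 0 < 2 * ℓ + 3 := by linarith
  refine mul_nonneg (by positivity) (setIntegral_nonneg measurableSet_Ioc ?_)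
  intro ε hε
  have h1 := base1_nonneg hε.2
  have h2 := base2_nonneg hL hr hε.1.le
  positivity

lemma hawkingMass_nonneg (k ℓ L0 : ℝ) (hl : -(1 / 2) ≤ ℓ) (hL : 0 < L0)
    (y : ℝ → ℝ) (r : ℝ) : 0 ≤ hawkingMass k ℓ L0 y r := by
  unfold hawkingMass
  refine mul_nonneg (by positivity) (setIntegral_nonneg measurableSet_Ioc ?_)
  intro s hs
  have := rho_nonneg k ℓ L0 hl hL y s hs.1
  positivity

lemma quasi_antitone (k ℓ L0 : ℝ) (hl : -(1 / 2) ≤ ℓ) (hL : 0 < L0)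
    (y : ℝ → ℝ) (hy : QuasiShell k ℓ L0 y) : AntitoneOn y (Set.Ici 0) := by
  refine antitoneOn_of_deriv_nonpos (convex_Ici 0) hy.1.continuousOn ?_ ?_
  · intro x hx
    rw [interior_Ici] at hx
    exact (hy.2 x hx).2.differentiableAt.differentiableWithinAt
  · intro x hx
    rw [interior_Ici] at hx
    have hx0 : 0 < x := hx
    obtain ⟨h1, h2⟩ := hy.2 x hx
    rw [h2.deriv]
    have h3 : 0 < (1 - 2 * hawkingMass k ℓ L0 y x / x)⁻¹ := inv_pos.2 (by linarith)
    have h4 := pres_nonneg k ℓ L0 hl hL y x hx0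
    have h5 := hawkingMass_nonneg k ℓ L0 hl hL y x
    have h6 : 0 ≤ 4 * π * x * pres k ℓ L0 y x + hawkingMass k ℓ L0 y x / x ^ 2 := by positivity
    rw [neg_mul]
    exact neg_nonpos.2 (mul_nonneg h3.le h6)

/-- Two-sided bound for the energy integral, with `b = e^z`, `a ≤ b ≤ 2a`. -/
lemma integral_bounds (k n a z g : ℝ) (hk : 0 ≤ k) (hn : 0 ≤ n) (ha : 0 < a) (hg : 0 ≤ g)
    (hb2 : Real.exp z ≤ 2 * a) (hd1 : a * g ≤ Real.exp z - a)
    (hd2 : Real.exp z - a ≤ 2 * a * g) :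
    (g / 6) ^ k * a ^ 2 * (a ^ 2 * g / 3) ^ n * (a * g / 3) ≤
      ∫ ε in Set.Ioc a (Real.exp z),
        (1 - ε * Real.exp (-z)) ^ k * ε ^ 2 * (ε ^ 2 - a ^ 2) ^ n ∧
    ∫ ε in Set.Ioc a (Real.exp z),
        (1 - ε * Real.exp (-z)) ^ k * ε ^ 2 * (ε ^ 2 - a ^ 2) ^ n ≤
      (2 * g) ^ k * (4 * a ^ 2) * (6 * a ^ 2 * g) ^ n * (2 * a * g) := by
  rw [Real.exp_neg]
  set b := Real.exp z with hb
  have hab : a ≤ b := by nlinarith [mul_nonneg ha.le hg]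
  have hb0 : 0 < b := lt_of_lt_of_le ha hab
  have hcont : Continuous (fun ε : ℝ => (1 - ε * b⁻¹) ^ k * ε ^ 2 * (ε ^ 2 - a ^ 2) ^ n) := by
    refine Continuous.mul (Continuous.mul ?_ (by fun_prop)) ?_
    · exact Continuous.rpow_const (by fun_prop) (fun _ => Or.inr hk)
    · exact Continuous.rpow_const (by fun_prop) (fun _ => Or.inr hn)
  have hint : ∀ u v : ℝ, IntegrableOn
      (fun ε : ℝ => (1 - ε * b⁻¹) ^ k * ε ^ 2 * (ε ^ 2 - a ^ 2) ^ n) (Set.Ioc u v) := fun u v =>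
    (hcont.integrableOn_Icc).mono_set Ioc_subset_Icc_self
  have hB1 : ∀ ε ∈ Set.Ioc a b, 0 ≤ 1 - ε * b⁻¹ := by
    intro ε hε
    rw [← div_eq_mul_inv, sub_nonneg, div_le_one hb0]; exact hε.2
  have hB2 : ∀ ε ∈ Set.Ioc a b, 0 ≤ ε ^ 2 - a ^ 2 := by
    intro ε hε
    nlinarith [hε.1]
  have hconst : ∀ u v c : ℝ, u ≤ v → ∫ _ in Set.Ioc u v, c = c * (v - u) := by
    intro u v c huv
    rw [setIntegral_const, Real.volume_real_Ioc_of_le huv, smul_eq_mul, mul_comm]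
  constructor
  · set d := b - a with hd
    have hd0 : 0 ≤ d := by linarith
    have hsub : Set.Ioc (a + d / 3) (a + 2 * d / 3) ⊆ Set.Ioc a b := by
      intro x hx
      constructor
      · linarith [hx.1]
      · linarith [hx.2]
    calc _ ≤ (g / 6) ^ k * a ^ 2 * (a ^ 2 * g / 3) ^ n * ((a + 2 * d / 3) - (a + d / 3)) := by
          have : a * g / 3 ≤ (a + 2 * d / 3) - (a + d / 3) := by linarith
          gcongr
      _ = ∫ _ in Set.Ioc (a + d / 3) (a + 2 * d / 3),
            (g / 6) ^ k * a ^ 2 * (a ^ 2 * g / 3) ^ n := by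
          rw [hconst _ _ _ (by linarith)]
      _ ≤ ∫ ε in Set.Ioc (a + d / 3) (a + 2 * d / 3),
            (1 - ε * b⁻¹) ^ k * ε ^ 2 * (ε ^ 2 - a ^ 2) ^ n := by
          refine setIntegral_mono_on (integrableOn_const (by simp)) (hint _ _) measurableSet_Ioc ?_
          intro ε hε
          have h0 := hsub hε
          have h1 := hB1 ε h0
          have h2 := hB2 ε h0
          have h3 : g / 6 ≤ 1 - ε * b⁻¹ := by
            have : 1 - ε * b⁻¹ = (b - ε) / b := by field_simp
            rw [this, le_div_iff₀ hb0]
            have h5 : d / 3 ≤ b - ε := by linarith [hε.2]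
            nlinarith
          have h4 : a ^ 2 * g / 3 ≤ ε ^ 2 - a ^ 2 := by
            have h5 : a * g / 3 ≤ ε - a := by linarith [hε.1]
            have h6 : a ≤ ε + a := by linarith [h0.1]
            nlinarith [mul_nonneg ha.le hg, mul_le_mul h5 h6 ha.le (by linarith [h0.1])]
          have h5 : a ≤ ε := h0.1.le
          gcongr
      _ ≤ _ := by
          refine setIntegral_mono_set (hint _ _) ?_ (LE.le.eventuallyLE hsub)
          filter_upwards [ae_restrict_mem measurableSet_Ioc] with ε hε
          have h1 := hB1 ε hε
          have h2 := hB2 ε hε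
          have : 0 ≤ (1 - ε * b⁻¹) ^ k * ε ^ 2 * (ε ^ 2 - a ^ 2) ^ n := by positivity
          simpa using this
  · calc _ ≤ ∫ _ in Set.Ioc a b, (2 * g) ^ k * (4 * a ^ 2) * (6 * a ^ 2 * g) ^ n := by
          refine setIntegral_mono_on (hint _ _) (integrableOn_const (by simp)) measurableSet_Ioc ?_
          intro ε hε
          have h1 := hB1 ε hε
          have h2 := hB2 ε hε
          have hεa := hε.1
          have hεb := hε.2
          have h3 : 1 - ε * b⁻¹ ≤ 2 * g := by
            have : 1 - ε * b⁻¹ = (b - ε) / b := by field_simp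
            rw [this, div_le_iff₀ hb0]
            nlinarith
          have h4 : ε ^ 2 - a ^ 2 ≤ 6 * a ^ 2 * g := by
            have h5 : ε - a ≤ 2 * a * g := by linarith
            have h6 : ε + a ≤ 3 * a := by linarith
            nlinarith [mul_le_mul h5 h6 (by linarith) (by positivity)]
          have h5 : ε ^ 2 ≤ 4 * a ^ 2 := by nlinarith
          gcongr
      _ = (2 * g) ^ k * (4 * a ^ 2) * (6 * a ^ 2 * g) ^ n * (b - a) := hconst _ _ _ hab
      _ ≤ _ := by gcongr

/-- Two-sided bounds `C_l γ^{k+ℓ+3/2}/r⁴ ≤ ϱ ≤ C_u γ^{k+ℓ+3/2}/r⁴`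
on `[R₀, 2R₀]` where `γ ≥ 0`, with constants depending only on `k, ℓ, L₀`. -/
theorem rho_bounds (k ℓ L0 : ℝ) (hk : 0 ≤ k) (hl : -(1 / 2) ≤ ℓ) (hL : 0 < L0) :
    ∃ Cl Cu : ℝ, 0 < Cl ∧ 0 < Cu ∧
      ∀ y : ℝ → ℝ, QuasiShell k ℓ L0 y →
        ∀ r, innerRadius L0 y ≤ r → r ≤ 2 * innerRadius L0 y →
          0 ≤ charFn L0 y r →
          Cl * charFn L0 y r ^ (k + ℓ + 3 / 2) / r ^ 4 ≤ rho k ℓ L0 y r ∧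
          rho k ℓ L0 y r ≤ Cu * charFn L0 y r ^ (k + ℓ + 3 / 2) / r ^ 4 := by
  have hc := cConst_pos ℓ hl
  have hs : 0 < Real.sqrt L0 := Real.sqrt_pos.2 hL
  refine ⟨cConst ℓ * (Real.sqrt L0 ^ (2 * ℓ) * Real.sqrt L0 ^ 4) *
      ((1 / 6) ^ k * (1 / 3) ^ (ℓ + 1 / 2) / 3),
    cConst ℓ * (Real.sqrt L0 ^ (2 * ℓ) * Real.sqrt L0 ^ 4) *
      (2 ^ k * 4 * 6 ^ (ℓ + 1 / 2) * 2), by positivity, by positivity, ?_⟩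
  intro y hy r hr1 hr2 hg
  have hR : 0 < innerRadius L0 y := by unfold innerRadius; positivity
  have hr : 0 < r := lt_of_lt_of_le hR hr1
  have hyr : y r ≤ y 0 :=
    quasi_antitone k ℓ L0 hl hL y hy (Set.mem_Ici.2 le_rfl) (Set.mem_Ici.2 hr.le) hr.le
  set g := charFn L0 y r with hgdef
  set a := Real.sqrt L0 / r with hadef
  have ha : 0 < a := by positivity
  have ha2 : a ^ 2 = L0 / r ^ 2 := by rw [hadef, div_pow, Real.sq_sqrt hL.le]
  have hbg : Real.exp (y r) = a * Real.exp g := by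
    have : y r = Real.log a + g := by
      rw [hgdef]; unfold charFn; rw [← ha2, Real.log_pow]; push_cast; ring
    rw [this, Real.exp_add, Real.exp_log ha]
  have hb2 : Real.exp (y r) ≤ 2 * a := by
    calc Real.exp (y r) ≤ Real.exp (y 0) := Real.exp_le_exp.2 hyr
      _ ≤ 2 * a := by
        rw [hadef, ← mul_div_assoc, le_div_iff₀ hr]
        have : Real.exp (y 0) * innerRadius L0 y = Real.sqrt L0 := by
          unfold innerRadius
          rw [Real.exp_neg]; field_simp
        nlinarith [Real.exp_pos (y 0)]
  have hg2 : Real.exp g ≤ 2 := by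
    rw [hbg] at hb2; nlinarith
  have hd1 : a * g ≤ Real.exp (y r) - a := by
    rw [hbg]; nlinarith [Real.add_one_le_exp g]
  have hd2 : Real.exp (y r) - a ≤ 2 * a * g := by
    have h1 := Real.add_one_le_exp (-g)
    have h2 : Real.exp g * Real.exp (-g) = 1 := by rw [← Real.exp_add]; simp
    have h3 : Real.exp g - 1 ≤ 2 * g := by nlinarith [Real.exp_pos g]
    rw [hbg]; nlinarith
  obtain ⟨hlo, hup⟩ := integral_bounds k (ℓ + 1 / 2) a (y r) g hk (by linarith) ha hg hb2 hd1 hd2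
  have hrho : rho k ℓ L0 y r = cConst ℓ * r ^ (2 * ℓ) *
      ∫ ε in Set.Ioc a (Real.exp (y r)),
        (1 - ε * Real.exp (-(y r))) ^ k * ε ^ 2 * (ε ^ 2 - a ^ 2) ^ (ℓ + 1 / 2) := by
    unfold rho; rw [ha2]
  have hpow : r ^ (2 * ℓ) * (a ^ 2 * (a ^ 2) ^ (ℓ + 1 / 2) * a) =
      Real.sqrt L0 ^ (2 * ℓ) * Real.sqrt L0 ^ 4 / r ^ 4 := by
    have h1 : (a ^ 2) ^ (ℓ + 1 / 2) = a ^ (2 * ℓ) * a := by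
      rw [← Real.rpow_natCast, ← Real.rpow_mul ha.le]
      have : ((2 : ℕ) : ℝ) * (ℓ + 1 / 2) = 2 * ℓ + 1 := by push_cast; ring
      rw [this, Real.rpow_add ha, Real.rpow_one]
    have h2 : r ^ (2 * ℓ) * a ^ (2 * ℓ) = Real.sqrt L0 ^ (2 * ℓ) := by
      rw [← Real.mul_rpow hr.le ha.le, hadef, mul_div_cancel₀ _ hr.ne']
    have h3 : a ^ 4 = Real.sqrt L0 ^ 4 / r ^ 4 := by rw [hadef, div_pow]
    rw [h1, mul_div_assoc, ← h3, ← h2]; ring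
  have hgpow : g ^ (k + ℓ + 3 / 2) = g ^ k * g ^ (ℓ + 1 / 2) * g := by
    have : k + ℓ + 3 / 2 = k + (ℓ + 1 / 2) + 1 := by ring
    rw [this, Real.rpow_add_of_nonneg hg (by linarith) zero_le_one,
      Real.rpow_add_of_nonneg hg hk (by linarith), Real.rpow_one]
  have hcr : 0 ≤ cConst ℓ * r ^ (2 * ℓ) := by positivity
  rw [hrho, hgpow]
  constructor
  · refine le_trans (le_of_eq ?_) (mul_le_mul_of_nonneg_left hlo hcr)
    have e1 : (g / 6) ^ k = (1 / 6) ^ k * g ^ k := by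
      rw [← Real.mul_rpow (by norm_num) hg]; congr 1; ring
    have e2 : (a ^ 2 * g / 3) ^ (ℓ + 1 / 2) =
        (1 / 3) ^ (ℓ + 1 / 2) * ((a ^ 2) ^ (ℓ + 1 / 2) * g ^ (ℓ + 1 / 2)) := by
      rw [← Real.mul_rpow (by positivity) hg, ← Real.mul_rpow (by norm_num) (by positivity)]
      congr 1; ring
    rw [e1, e2]
    linear_combination (-(cConst ℓ * ((1 / 6) ^ k * (1 / 3) ^ (ℓ + 1 / 2) / 3) *
      (g ^ k * g ^ (ℓ + 1 / 2) * g))) * hpow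
  · refine le_trans (mul_le_mul_of_nonneg_left hup hcr) (le_of_eq ?_)
    have e1 : (2 * g) ^ k = 2 ^ k * g ^ k := Real.mul_rpow (by norm_num) hg
    have e2 : (6 * a ^ 2 * g) ^ (ℓ + 1 / 2) =
        6 ^ (ℓ + 1 / 2) * ((a ^ 2) ^ (ℓ + 1 / 2) * g ^ (ℓ + 1 / 2)) := by
      rw [← Real.mul_rpow (by positivity) hg, ← Real.mul_rpow (by norm_num) (by positivity)]
      congr 1; ring
    rw [e1, e2]
    linear_combination (cConst ℓ * (2 ^ k * 4 * 6 ^ (ℓ + 1 / 2) * 2) *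
      (g ^ k * g ^ (ℓ + 1 / 2) * g)) * hpow
end

section
/- Let r > 0 and suppose the real-valued functions λ, y, m, ϱ, p, p_T are differentiable at r and satisfy m′(r) = 4πr²ϱ(r), λ′(r) − y′(r) = 4πr e^{2λ(r)}(ϱ(r) + p(r)), y′(r) = −e^{2λ(r)}[m(r)/r² + 4πr p(r)], and the Tolman–Oppenheimer–Volkov equation p′(r) = y′(r)(ϱ(r) + p(r)) − (2/r)(p(r) − p_T(r)). Then (d/dr)[e^{λ(r)−y(r)}(m(r) + 4πr³p(r))] = 4πr² e^{λ(r)−y(r)}(ϱ(r) + p(r) + 2p_T(r)). -/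
open Real

/-- The TOV identity
`(d/dr)[e^{λ-y}(m + 4πr³p)] = 4πr² e^{λ-y}(ϱ + p + 2p_T)`. -/
theorem tov_derivative_identity (r : ℝ) (hr : 0 < r) (lam y m ϱ p pT : ℝ → ℝ)
    (hlam : DifferentiableAt ℝ lam r) (hy : DifferentiableAt ℝ y r)
    (hm : DifferentiableAt ℝ m r) (hpd : DifferentiableAt ℝ p r)
    (h1 : deriv m r = 4 * π * r ^ 2 * ϱ r)
    (h2 : deriv lam r - deriv y r = 4 * π * r * Real.exp (2 * lam r) * (ϱ r + p r))
    (h3 : deriv y r = -Real.exp (2 * lam r) * (m r / r ^ 2 + 4 * π * r * p r))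
    (h4 : deriv p r = deriv y r * (ϱ r + p r) - (2 / r) * (p r - pT r)) :
    deriv (fun s => Real.exp (lam s - y s) * (m s + 4 * π * s ^ 3 * p s)) r
      = 4 * π * r ^ 2 * Real.exp (lam r - y r) * (ϱ r + p r + 2 * pT r) := by
  have hr' : r ≠ 0 := hr.ne'
  have hE := (hlam.hasDerivAt.sub hy.hasDerivAt).exp
  have hP := ((hasDerivAt_pow 3 r).const_mul (4 * π)).mul hpd.hasDerivAt
  have hF := hE.mul (hm.hasDerivAt.add hP)
  refine HasDerivAt.deriv (hF.congr_deriv ?_)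
  rw [h2, h4, h1, h3]
  simp only [Pi.add_apply, Pi.sub_apply, Pi.mul_apply]
  field_simp
  push_cast
  ring
end

section
/- Let 0 < R₀ < r₂ and let m : [R₀, r₂] → ℝ be differentiable with m(R₀) = 0, m′(s) = 4πs²ϱ(s) for a continuous nonnegative function ϱ, m(s) ≥ 0 and 2m(s)/s < 1 for all s ∈ [R₀, r₂]; define λ by e^{−2λ(s)} = 1 − 2m(s)/s. Then ∫_{R₀}^{r₂} 4πs ϱ(s) e^{λ(s)} ds ≥ 1 − √(1 − 2m(r₂)/r₂). -/
open MeasureTheory Real Set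

/-- `∫_{R₀}^{r₂} 4πs ϱ(s) e^{λ(s)} ds ≥ 1 - √(1 - 2m(r₂)/r₂)`,
where `λ` is defined by `e^{-2λ(s)} = 1 - 2m(s)/s`. -/
theorem integral_lower_bound (R0 r2 : ℝ) (hR0 : 0 < R0) (hr2 : R0 < r2)
    (m ϱ lam : ℝ → ℝ)
    (hϱcont : ContinuousOn ϱ (Set.Icc R0 r2))
    (hϱnn : ∀ s ∈ Set.Icc R0 r2, 0 ≤ ϱ s)
    (hm0 : m R0 = 0)
    (hm' : ∀ s ∈ Set.Icc R0 r2,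
      HasDerivWithinAt m (4 * π * s ^ 2 * ϱ s) (Set.Icc R0 r2) s)
    (hmnn : ∀ s ∈ Set.Icc R0 r2, 0 ≤ m s)
    (hmlt : ∀ s ∈ Set.Icc R0 r2, 2 * m s / s < 1)
    (hlam : ∀ s ∈ Set.Icc R0 r2, Real.exp (-(2 * lam s)) = 1 - 2 * m s / s) :
    1 - Real.sqrt (1 - 2 * m r2 / r2) ≤
      ∫ s in Set.Ioc R0 r2, 4 * π * s * ϱ s * Real.exp (lam s) := by
  have hpos : ∀ s ∈ Set.Icc R0 r2, 0 < s := fun s hs => lt_of_lt_of_le hR0 hs.1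
  have hfpos : ∀ s ∈ Set.Icc R0 r2, 0 < 1 - 2 * m s / s := fun s hs => by
    have := hmlt s hs
    linarith
  have hexp : ∀ s ∈ Set.Icc R0 r2, Real.exp (lam s) = (Real.sqrt (1 - 2 * m s / s))⁻¹ := by
    intro s hs
    rw [← hlam s hs, show -(2 * lam s) = -lam s + -lam s by ring, Real.exp_add,
      Real.sqrt_mul_self (Real.exp_pos _).le, Real.exp_neg, inv_inv]
  have hmcont : ContinuousOn m (Set.Icc R0 r2) := fun s hs => (hm' s hs).continuousWithinAt
  have hfcont : ContinuousOn (fun s => Real.sqrt (1 - 2 * m s / s)) (Set.Icc R0 r2) := by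
    apply ContinuousOn.sqrt
    exact continuousOn_const.sub
      ((continuousOn_const.mul hmcont).div continuousOn_id (fun s hs => (hpos s hs).ne'))
  have hφcont : ContinuousOn (fun s => 4 * π * s * ϱ s * Real.exp (lam s)) (Set.Icc R0 r2) := by
    have h1 : ContinuousOn (fun s => 4 * π * s * ϱ s * (Real.sqrt (1 - 2 * m s / s))⁻¹)
        (Set.Icc R0 r2) :=
      ((continuousOn_const.mul continuousOn_id).mul hϱcont).mul
        (hfcont.inv₀ (fun s hs => (Real.sqrt_pos.2 (hfpos s hs)).ne'))
    refine h1.congr (fun s hs => ?_)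
    simp only [hexp s hs]
  have hderiv : ∀ s ∈ Set.Icc R0 r2,
      HasDerivWithinAt (fun s => -Real.sqrt (1 - 2 * m s / s))
        (4 * π * s * ϱ s * Real.exp (lam s) - Real.exp (lam s) * m s / s ^ 2)
        (Set.Icc R0 r2) s := by
    intro s hs
    have hs0 := (hpos s hs).ne'
    have hq := (Real.sqrt_pos.2 (hfpos s hs)).ne'
    have h1 := ((((hm' s hs).const_mul 2).fun_div (hasDerivWithinAt_id s _) hs0).const_sub 1)
    have h2 := (h1.sqrt (hfpos s hs).ne').fun_neg
    refine h2.congr_deriv ?_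
    rw [hexp s hs]
    simp only [id]
    generalize Real.sqrt (1 - 2 * m s / s) = q at hq ⊢
    field_simp
  have key := intervalIntegral.sub_le_integral_of_hasDeriv_right_of_le hr2.le
    (g := fun s => -Real.sqrt (1 - 2 * m s / s)) hfcont.neg
    (fun s hs => (hderiv s ⟨hs.1.le, hs.2.le⟩).mono_of_mem_nhdsWithin
      (Filter.mem_of_superset (Ioo_mem_nhdsGT hs.2)
        (fun y hy => ⟨hs.1.le.trans hy.1.le, hy.2.le⟩)))
    (φ := fun s => 4 * π * s * ϱ s * Real.exp (lam s))
    hφcont.integrableOn_Icc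
    (fun s hs => by
      have hn := hmnn s ⟨hs.1.le, hs.2.le⟩
      have : 0 ≤ Real.exp (lam s) * m s / s ^ 2 := by positivity
      linarith)
  rw [intervalIntegral.integral_of_le hr2.le] at key
  simp only [hm0, mul_zero, zero_div, sub_zero, Real.sqrt_one] at key
  linarith
end

section
/- Let 0 < r₂ < R and let x : [r₂, R) → ℝ be differentiable with x(r) > 3/4 for all r and satisfying the differential inequality r x′(r) ≥ (4/3)x(r)² − x(r) for all r ∈ [r₂, R). Then 1/x(r) ≤ 4/3 − (4/3 − 1/x(r₂))·(r/r₂) for all r ∈ [r₂, R); in particular, since 1/x(r) > 0, one has R ≤ r₂ · 4x(r₂)/(4x(r₂) − 3). -/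
open Real Set

/-- Comparison lemma for the Riccati-type differential inequality
`r x' ≥ (4/3)x² - x` with `x > 3/4` on `[r₂, R)`. -/
theorem riccati_comparison (r2 R : ℝ) (hr2 : 0 < r2) (hR : r2 < R) (x : ℝ → ℝ)
    (hx : ∀ r ∈ Set.Ico r2 R, 3 / 4 < x r)
    (hdiff : DifferentiableOn ℝ x (Set.Ico r2 R))
    (hineq : ∀ r ∈ Set.Ico r2 R,
      (4 / 3) * x r ^ 2 - x r ≤ r * derivWithin x (Set.Ico r2 R) r) :
    (∀ r ∈ Set.Ico r2 R, 1 / x r ≤ 4 / 3 - (4 / 3 - 1 / x r2) * (r / r2)) ∧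
    R ≤ r2 * (4 * x r2) / (4 * x r2 - 3) := by
  have hmono : MonotoneOn (fun r => (4 / 3 - (x r)⁻¹) / r) (Set.Ico r2 R) := by
    apply monotoneOn_of_deriv_nonneg (convex_Ico r2 R)
    · apply ContinuousOn.div
      · exact continuousOn_const.sub (hdiff.continuousOn.inv₀ (fun r hr => by
          have := hx r hr
          linarith))
      · exact continuousOn_id
      · intro r hr
        have := hr.1
        exact (lt_of_lt_of_le hr2 this).ne'
    · intro r hr
      rw [interior_Ico] at hr
      have hr' : r ∈ Set.Ico r2 R := ⟨hr.1.le, hr.2⟩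
      have hn : Set.Ico r2 R ∈ nhds r := Ico_mem_nhds hr.1 hr.2
      have h0 : r ≠ 0 := (hr2.trans hr.1).ne'
      have hx0 : x r ≠ 0 := by
        have := hx r hr'
        linarith
      have hd : DifferentiableAt ℝ x r := (hdiff r hr').differentiableAt hn
      exact (((differentiableAt_const _).sub (hd.inv hx0)).div
        differentiableAt_id h0).differentiableWithinAt
    · intro r hr
      rw [interior_Ico] at hr
      have hr' : r ∈ Set.Ico r2 R := ⟨hr.1.le, hr.2⟩
      have hn : Set.Ico r2 R ∈ nhds r := Ico_mem_nhds hr.1 hr.2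
      have hrp : 0 < r := hr2.trans hr.1
      have h0 : r ≠ 0 := hrp.ne'
      have hxr := hx r hr'
      have hx0 : x r ≠ 0 := by linarith
      have hd : DifferentiableAt ℝ x r := (hdiff r hr').differentiableAt hn
      have hi := hineq r hr'
      rw [derivWithin_of_mem_nhds hn] at hi
      have hD := ((hd.hasDerivAt.inv hx0).const_sub (4 / 3)).div (hasDerivAt_id r) h0
      have hD' : deriv (fun r => (4 / 3 - (x r)⁻¹) / r) r
          = (r * deriv x r - ((4 / 3) * x r ^ 2 - x r)) / (r ^ 2 * x r ^ 2) := by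
        refine Eq.trans hD.deriv ?_
        simp only [id, Pi.inv_apply]
        field_simp
      rw [hD']
      apply div_nonneg
      · linarith
      · positivity
  have hmem : r2 ∈ Set.Ico r2 R := ⟨le_rfl, hR⟩
  have h1 : ∀ r ∈ Set.Ico r2 R, 1 / x r ≤ 4 / 3 - (4 / 3 - 1 / x r2) * (r / r2) := by
    intro r hr
    have hrp : 0 < r := lt_of_lt_of_le hr2 hr.1
    have h := hmono hmem hr hr.1
    simp only at h
    rw [le_div_iff₀ hrp] at h
    rw [one_div, one_div]
    have e : (4 / 3 - (x r2)⁻¹) / r2 * r = (4 / 3 - (x r2)⁻¹) * (r / r2) := by ring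
    linarith
  refine ⟨h1, ?_⟩
  by_contra hlt
  push Not at hlt
  have hx2 := hx r2 hmem
  have hp : 0 < 4 * x r2 - 3 := by linarith
  have hB : r2 * (4 * x r2) / (4 * x r2 - 3) ∈ Set.Ico r2 R := by
    refine ⟨?_, hlt⟩
    rw [le_div_iff₀ hp]
    nlinarith
  have h := h1 _ hB
  have hpos : 0 < 1 / x (r2 * (4 * x r2) / (4 * x r2 - 3)) := by
    have := hx _ hB
    exact one_div_pos.mpr (by linarith)
  have e : (4 / 3 - 1 / x r2) * (r2 * (4 * x r2) / (4 * x r2 - 3) / r2) = 4 / 3 := by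
    have hx0 : x r2 ≠ 0 := by linarith
    have := hp.ne'
    field_simp
  linarith
end

section
/- Let q ≥ 1, R₀ > 0, δ > 0 and C_u > 0, and let ϱ : [0,∞) → ℝ be a continuous nonnegative function with ϱ(s) = 0 for s ≤ R₀ and ϱ(s) ≤ C_u δ^q/(R₀^q s⁴) for s ∈ [R₀, R₀ + δ]. Then, with m(r) = 4π∫₀^r s²ϱ(s) ds, for every σ ∈ [0, δ] one has m(R₀ + σ) ≤ 4πC_u δ^q σ/(R₀^{q+1}(R₀ + σ)) and consequently m(R₀ + σ)/(R₀ + σ) ≤ 4πC_u δ^{q+1}/R₀^{q+3}. -/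
open MeasureTheory Real Set

/-- Mass estimate near the inner boundary of the shell:
`m(R₀+σ) ≤ 4πC_u δ^q σ/(R₀^{q+1}(R₀+σ))` and
`m(R₀+σ)/(R₀+σ) ≤ 4πC_u δ^{q+1}/R₀^{q+3}` for `σ ∈ [0,δ]`. -/
theorem mass_estimate (q R0 δ Cu : ℝ) (hq : 1 ≤ q) (hR0 : 0 < R0) (hδ : 0 < δ)
    (hCu : 0 < Cu) (ϱ : ℝ → ℝ) (hcont : Continuous ϱ) (hnn : ∀ s, 0 ≤ ϱ s)
    (hvac : ∀ s ≤ R0, ϱ s = 0)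
    (hbound : ∀ s ∈ Set.Icc R0 (R0 + δ), ϱ s ≤ Cu * δ ^ q / (R0 ^ q * s ^ 4)) :
    ∀ σ ∈ Set.Icc (0 : ℝ) δ,
      (4 * π * ∫ s in Set.Ioc (0 : ℝ) (R0 + σ), s ^ 2 * ϱ s) ≤
        4 * π * Cu * δ ^ q * σ / (R0 ^ (q + 1) * (R0 + σ)) ∧
      (4 * π * ∫ s in Set.Ioc (0 : ℝ) (R0 + σ), s ^ 2 * ϱ s) / (R0 + σ) ≤
        4 * π * Cu * δ ^ (q + 1) / R0 ^ (q + 3) := by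
  intro σ hσ
  obtain ⟨h0, h1⟩ := hσ
  have hRσ : 0 < R0 + σ := by linarith
  have hci : Continuous (fun s : ℝ => s ^ 2 * ϱ s) := by fun_prop
  set K : ℝ := Cu * δ ^ q / R0 ^ q with hK
  have hRq : 0 < R0 ^ q := Real.rpow_pos_of_pos hR0 q
  have hδq : 0 < δ ^ q := Real.rpow_pos_of_pos hδ q
  have hKpos : 0 < K := by positivity
  have hpos : ∀ s ∈ Set.uIcc R0 (R0 + σ), 0 < s := by
    intro s hs
    rw [Set.uIcc_of_le (by linarith)] at hs
    linarith [hs.1]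
  have hcontK : ContinuousOn (fun s : ℝ => K * (s ^ 2)⁻¹) (Set.uIcc R0 (R0 + σ)) := by
    apply ContinuousOn.mul continuousOn_const
    apply ContinuousOn.inv₀ (by fun_prop)
    intro s hs
    have := hpos s hs
    positivity
  have hFTC : ∫ s in R0..(R0 + σ), K * (s ^ 2)⁻¹ = K * σ / (R0 * (R0 + σ)) := by
    rw [intervalIntegral.integral_eq_sub_of_hasDerivAt (f := fun s : ℝ => K * (-s⁻¹))
      _ hcontK.intervalIntegrable]
    · field_simp
      ring
    · intro s hs
      have h := ((hasDerivAt_inv (hpos s hs).ne').neg).const_mul K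
      simpa using h
  have hzero : ∫ s in (0:ℝ)..R0, s ^ 2 * ϱ s = 0 := by
    rw [intervalIntegral.integral_congr (g := fun _ => (0:ℝ))]
    · simp
    · intro s hs
      rw [Set.uIcc_of_le hR0.le] at hs
      simp [hvac s hs.2]
  have hI : ∫ s in Set.Ioc (0 : ℝ) (R0 + σ), s ^ 2 * ϱ s ≤ K * σ / (R0 * (R0 + σ)) := by
    rw [← intervalIntegral.integral_of_le hRσ.le,
      ← intervalIntegral.integral_add_adjacent_intervals (b := R0)
        (hci.intervalIntegrable _ _) (hci.intervalIntegrable _ _), hzero, zero_add, ← hFTC]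
    apply intervalIntegral.integral_mono_on (by linarith) (hci.intervalIntegrable _ _)
      hcontK.intervalIntegrable
    intro s hs
    have hs0 : 0 < s := by linarith [hs.1]
    have hb := hbound s ⟨hs.1, by linarith [hs.2]⟩
    calc s ^ 2 * ϱ s ≤ s ^ 2 * (Cu * δ ^ q / (R0 ^ q * s ^ 4)) := by gcongr
      _ = K * (s ^ 2)⁻¹ := by rw [hK]; field_simp
  have hA : (4 * π * ∫ s in Set.Ioc (0 : ℝ) (R0 + σ), s ^ 2 * ϱ s) ≤
        4 * π * Cu * δ ^ q * σ / (R0 ^ (q + 1) * (R0 + σ)) := by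
    calc _ ≤ 4 * π * (K * σ / (R0 * (R0 + σ))) := by
          have := Real.pi_pos
          gcongr
      _ = _ := by
          rw [hK, Real.rpow_add hR0, Real.rpow_one]
          field_simp
  refine ⟨hA, ?_⟩
  have e3 : R0 ^ (q + 3) = R0 ^ q * R0 ^ 3 := by
    rw [Real.rpow_add hR0]
    norm_cast
  calc _ ≤ 4 * π * Cu * δ ^ q * σ / (R0 ^ (q + 1) * (R0 + σ)) / (R0 + σ) := by gcongr
    _ ≤ 4 * π * Cu * δ ^ q * δ / (R0 ^ (q + 1) * R0) / R0 := by
        have := Real.pi_pos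
        have : 0 < R0 ^ (q + 1) := Real.rpow_pos_of_pos hR0 _
        gcongr <;> linarith
    _ = _ := by
        rw [e3, Real.rpow_add hR0, Real.rpow_add hδ, Real.rpow_one, Real.rpow_one]
        field_simp
end
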